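/- Define r(s) := s·∫₀¹ u·log((1+√(1−u²))/u) · (1 − s(1 − πu/2))^{−1} du for s ∈ (0,1). Then r(1⁻) = 1 and, as s → 1⁻, 1 − r(s) = (2/π²)·(1−s)·log²(1−s) − (4/π²)·log(π)·(1−s)·log(1−s) + o((1−s)·log(1−s)). -/

import Mathlib

open Real MeasureTheory Filter Asymptotics

/-- The inverse hyperbolic secant `u ↦ log ((1 + √(1 - u²)) / u)`. -/
noncomputable def arsech (u : ℝ) : ℝ := Real.log ((1 + Real.sqrt (1 - u ^ 2)) / u)

lemma arsech_eq_log_sub_log {u : ℝ} (hu : 0 < u) :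
    arsech u = Real.log (1 + Real.sqrt (1 - u ^ 2)) - Real.log u :=
  Real.log_div (by positivity) hu.ne'

lemma arsech_nonneg {u : ℝ} (h0 : 0 < u) (h1 : u ≤ 1) : 0 ≤ arsech u := by
  refine Real.log_nonneg ?_
  rw [le_div_iff₀ h0]
  linarith [Real.sqrt_nonneg (1 - u ^ 2)]

lemma hasDerivAt_mul_arsech_add_arcsin {u : ℝ} (h0 : 0 < u) (h1 : u < 1) :
    HasDerivAt (fun x => (x * Real.log (1 + Real.sqrt (1 - x ^ 2)) - x * Real.log x) + arcsin x)
      (arsech u) u := by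
  have hpos : 0 < 1 - u ^ 2 := by nlinarith
  have hw : 0 < Real.sqrt (1 - u ^ 2) := Real.sqrt_pos.2 hpos
  have hsqrt : HasDerivAt (fun x : ℝ => 1 + Real.sqrt (1 - x ^ 2))
      (-(2 * u) / (2 * Real.sqrt (1 - u ^ 2))) u := by
    have h := ((hasDerivAt_pow 2 u).const_sub 1).sqrt hpos.ne'
    simpa using h.const_add 1
  have hlog := hsqrt.log (by positivity)
  have h := (((hasDerivAt_id u).mul hlog).sub
    ((hasDerivAt_id u).mul (Real.hasDerivAt_log h0.ne'))).add
    (Real.hasDerivAt_arcsin (by linarith) h1.ne)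
  refine h.congr_deriv ?_
  rw [arsech_eq_log_sub_log h0]
  have hsq : Real.sqrt (1 - u ^ 2) ^ 2 = 1 - u ^ 2 := Real.sq_sqrt hpos.le
  simp only [id]
  set w := Real.sqrt (1 - u ^ 2)
  have hw1 : 1 + w ≠ 0 := by positivity
  field_simp
  linear_combination (-1 : ℝ) * hsq

lemma continuous_mul_arsech_add_arcsin : Continuous
    (fun x : ℝ => (x * Real.log (1 + Real.sqrt (1 - x ^ 2)) - x * Real.log x) + arcsin x) := by
  have h : Continuous fun x : ℝ => Real.log (1 + Real.sqrt (1 - x ^ 2)) :=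
    Continuous.log (by fun_prop) fun x => by positivity
  exact ((continuous_id.mul h).sub Real.continuous_mul_log).add Real.continuous_arcsin

lemma intervalIntegrable_arsech : IntervalIntegrable arsech volume 0 1 := by
  rw [intervalIntegrable_iff_integrableOn_Ioc_of_le zero_le_one]
  exact intervalIntegral.integrableOn_deriv_of_nonneg
    continuous_mul_arsech_add_arcsin.continuousOn
    (fun u hu => hasDerivAt_mul_arsech_add_arcsin hu.1 hu.2)
    (fun u hu => arsech_nonneg hu.1 hu.2.le)

lemma integral_arsech : ∫ u in (0:ℝ)..1, arsech u = π / 2 := by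
  rw [intervalIntegral.integral_eq_sub_of_hasDerivAt_of_le zero_le_one
    continuous_mul_arsech_add_arcsin.continuousOn
    (fun u hu => hasDerivAt_mul_arsech_add_arcsin hu.1 hu.2) intervalIntegrable_arsech]
  simp

lemma abs_log_one_add_sqrt_sub_log_two_le {u : ℝ} (h0 : 0 < u) (h1 : u ≤ 1) :
    |Real.log (1 + Real.sqrt (1 - u ^ 2)) - Real.log 2| ≤ u := by
  have hu : 0 ≤ 1 - u ^ 2 := by nlinarith
  have hle : Real.sqrt (1 - u ^ 2) ≤ 1 := Real.sqrt_le_one.2 (by nlinarith)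
  have hge : 1 - u ^ 2 ≤ Real.sqrt (1 - u ^ 2) := Real.le_sqrt_of_sq_le (by nlinarith [sq_nonneg u])
  set w := Real.sqrt (1 - u ^ 2)
  have hw : 0 ≤ w := hu.trans hge
  have hup : Real.log (1 + w) ≤ Real.log 2 := Real.log_le_log (by linarith) (by linarith)
  rw [abs_of_nonpos (by linarith), neg_sub, ← Real.log_div two_ne_zero (by linarith)]
  refine (Real.log_le_sub_one_of_pos (by positivity)).trans ?_
  rw [sub_le_iff_le_add, div_le_iff₀ (by linarith)]
  nlinarith

lemma log_one_add_le_two_mul_sqrt {x : ℝ} (hx : 0 ≤ x) :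
    Real.log (1 + x) ≤ 2 * Real.sqrt x := by
  have hs := Real.sqrt_nonneg x
  have h : Real.log (1 + x) ≤ Real.log ((1 + Real.sqrt x) ^ 2) :=
    Real.log_le_log (by linarith) (by nlinarith [Real.sq_sqrt hx])
  rw [Real.log_pow] at h
  have := Real.log_le_sub_one_of_pos (show 0 < 1 + Real.sqrt x by linarith)
  push_cast at h
  linarith

/-- The integrand `arsech u / (ε + u)` differs from the derivative of
`log 2 * log (ε + u) - log (ε + u) ^ 2 / 2` by a function whose integral is bounded in `ε`. -/
lemma abs_arsech_div_sub_le {ε u : ℝ} (hε : 0 < ε) (h0 : 0 < u) (h1 : u ≤ 1) :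
    |arsech u / (ε + u) - (Real.log 2 - Real.log (ε + u)) / (ε + u)| ≤
      1 + 2 * Real.sqrt (ε / u) / (ε + u) := by
  have hs : 0 < ε + u := by positivity
  have hg := abs_log_one_add_sqrt_sub_log_two_le h0 h1
  have hl : Real.log (ε + u) - Real.log u = Real.log (1 + ε / u) := by
    rw [← Real.log_div hs.ne' h0.ne']
    congr 1
    field_simp
    ring
  have hl0 : 0 ≤ Real.log (1 + ε / u) := Real.log_nonneg (by linarith [div_pos hε h0])
  have hl1 := log_one_add_le_two_mul_sqrt (div_pos hε h0).le
  rw [← sub_div, abs_div, abs_of_pos hs, div_le_iff₀ hs, add_mul, div_mul_cancel₀ _ hs.ne',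
    arsech_eq_log_sub_log h0]
  rw [abs_le] at hg ⊢
  constructor <;> linarith [hg.1, hg.2]

lemma hasDerivAt_add_four_mul_arctan {ε u : ℝ} (hε : 0 < ε) (h0 : 0 < u) :
    HasDerivAt (fun x => x + 4 * arctan (Real.sqrt (x / ε)))
      (1 + 2 * Real.sqrt (ε / u) / (ε + u)) u := by
  have hq : 0 < u / ε := div_pos h0 hε
  have h := (hasDerivAt_id u).add
    (((((hasDerivAt_id u).div_const ε).sqrt hq.ne').arctan).const_mul 4)
  refine h.congr_deriv ?_
  have hinv : Real.sqrt (ε / u) = 1 / Real.sqrt (u / ε) := by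
    rw [one_div, ← Real.sqrt_inv, inv_div]
  have hw : 0 < Real.sqrt (u / ε) := Real.sqrt_pos.2 hq
  simp only [id]
  rw [hinv, Real.sq_sqrt hq.le]
  set w := Real.sqrt (u / ε)
  have : ε + u ≠ 0 := by positivity
  field_simp
  ring

lemma intervalIntegrable_arsech_div {ε : ℝ} (hε : 0 < ε) :
    IntervalIntegrable (fun u => arsech u / (ε + u)) volume 0 1 := by
  simp only [div_eq_mul_inv]
  refine intervalIntegrable_arsech.mul_continuousOn (ContinuousOn.inv₀ (by fun_prop) ?_)
  intro u hu
  rw [Set.uIcc_of_le zero_le_one] at hu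
  linarith [hu.1]

/-- `∫₀¹ arsech u / (ε + u) du = log² ε / 2 - log 2 * log ε + O(1)` as `ε → 0⁺`. -/
lemma abs_integral_arsech_div_sub_le {ε : ℝ} (hε : 0 < ε) (hε1 : ε ≤ 1) :
    |(∫ u in (0:ℝ)..1, arsech u / (ε + u)) -
      (Real.log ε ^ 2 / 2 - Real.log 2 * Real.log ε)| ≤ 3 + 2 * π := by
  have hne : ∀ u ∈ Set.uIcc (0:ℝ) 1, ε + u ≠ 0 := fun u hu => by
    rw [Set.uIcc_of_le zero_le_one] at hu
    linarith [hu.1]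
  have hP : ∀ u ∈ Set.uIcc (0:ℝ) 1,
      HasDerivAt (fun x => Real.log 2 * Real.log (ε + x) - Real.log (ε + x) ^ 2 / 2)
        ((Real.log 2 - Real.log (ε + u)) / (ε + u)) u := fun u hu => by
    have hl := ((hasDerivAt_id u).const_add ε).log (hne u hu)
    refine ((hl.const_mul (Real.log 2)).sub ((hl.pow 2).div_const 2)).congr_deriv ?_
    have := hne u hu
    simp only [id]
    field_simp
    ring
  have hPc : ContinuousOn (fun u => (Real.log 2 - Real.log (ε + u)) / (ε + u))
      (Set.uIcc (0:ℝ) 1) :=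
    (continuousOn_const.sub (ContinuousOn.log (by fun_prop) hne)).div (by fun_prop) hne
  have hPi := hPc.intervalIntegrable (μ := volume)
  have hB : ContinuousOn (fun x => x + 4 * arctan (Real.sqrt (x / ε))) (Set.Icc (0:ℝ) 1) := by
    fun_prop
  have hBi : IntervalIntegrable (fun u => 1 + 2 * Real.sqrt (ε / u) / (ε + u)) volume 0 1 := by
    rw [intervalIntegrable_iff_integrableOn_Ioc_of_le zero_le_one]
    refine intervalIntegral.integrableOn_deriv_of_nonneg hB
      (fun u hu => hasDerivAt_add_four_mul_arctan hε hu.1) fun u hu => ?_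
    have := hu.1
    positivity
  have hle := intervalIntegral.norm_integral_le_of_norm_le (μ := volume) zero_le_one
    (Eventually.of_forall fun u hu => (Real.norm_eq_abs _).trans_le
      (abs_arsech_div_sub_le hε hu.1 hu.2)) hBi
  rw [intervalIntegral.integral_sub (intervalIntegrable_arsech_div hε) hPi,
    intervalIntegral.integral_eq_sub_of_hasDerivAt hP hPi,
    intervalIntegral.integral_eq_sub_of_hasDerivAt_of_le zero_le_one hB
      (fun u hu => hasDerivAt_add_four_mul_arctan hε hu.1) hBi, Real.norm_eq_abs] at hle
  simp only [add_zero, zero_div, Real.sqrt_zero, Real.arctan_zero, mul_zero] at hle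
  have h2 : Real.log 2 < 1 := Real.log_two_lt_d9.trans (by norm_num)
  have hm : 0 ≤ Real.log (ε + 1) := Real.log_nonneg (by linarith)
  have hm' : Real.log (ε + 1) ≤ Real.log 2 := Real.log_le_log (by linarith) (by linarith)
  have hat := Real.arctan_lt_pi_div_two (Real.sqrt (1 / ε))
  rw [abs_le] at hle ⊢
  constructor <;> nlinarith [hle.1, hle.2]

lemma one_sub_mul_integral_eq {s : ℝ} (h0 : 0 < s) (h1 : s < 1) :
    1 - s * ∫ u in (0:ℝ)..1, u * arsech u * (1 - s * (1 - π * u / 2))⁻¹ =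
      4 / (π ^ 2 * s) * (1 - s) *
        ∫ u in (0:ℝ)..1, arsech u / (2 * (1 - s) / (π * s) + u) := by
  have hπ := Real.pi_pos
  have hε : 0 < 2 * (1 - s) / (π * s) :=
    div_pos (by linarith) (by positivity)
  have key : ∫ u in (0:ℝ)..1, u * arsech u * (1 - s * (1 - π * u / 2))⁻¹ =
      ∫ u in (0:ℝ)..1, (2 / (π * s) * arsech u -
        4 / (π ^ 2 * s ^ 2) * (1 - s) * (arsech u / (2 * (1 - s) / (π * s) + u))) := by
    refine intervalIntegral.integral_congr fun u hu => ?_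
    rw [Set.uIcc_of_le zero_le_one] at hu
    have hd : 0 < 2 * (1 - s) + π * s * u := by
      have := mul_nonneg (mul_pos hπ h0).le hu.1
      linarith
    have e1 : 1 - s * (1 - π * u / 2) = (2 * (1 - s) + π * s * u) / 2 := by ring
    have e2 : 2 * (1 - s) / (π * s) + u = (2 * (1 - s) + π * s * u) / (π * s) := by
      field_simp
    simp only [e1, e2]
    have hd' := hd.ne'
    generalize hD : 2 * (1 - s) + π * s * u = D at hd'
    field_simp
    rw [← hD]
    ring
  rw [key, intervalIntegral.integral_sub (intervalIntegrable_arsech.const_mul _)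
    ((intervalIntegrable_arsech_div hε).const_mul _), intervalIntegral.integral_const_mul,
    intervalIntegral.integral_const_mul, integral_arsech]
  field_simp
  ring

lemma tendsto_one_sub_nhdsLT_one :
    Tendsto (fun s : ℝ => 1 - s) (nhdsWithin 1 (Set.Iio 1)) (nhdsWithin 0 (Set.Ioi 0)) := by
  refine tendsto_nhdsWithin_iff.2 ⟨?_, ?_⟩
  · have : Tendsto (fun s : ℝ => 1 - s) (nhds 1) (nhds (1 - 1)) :=
      (continuous_const.sub continuous_id).tendsto 1
    rw [sub_self] at this
    exact this.mono_left nhdsWithin_le_nhds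
  · filter_upwards [self_mem_nhdsWithin] with s hs
    exact sub_pos.2 (Set.mem_Iio.1 hs)

lemma tendsto_mul_log_sq_nhdsGT_zero :
    Tendsto (fun x : ℝ => x * Real.log x ^ 2) (nhdsWithin 0 (Set.Ioi 0)) (nhds 0) := by
  have h := (tendsto_log_mul_rpow_nhdsGT_zero (r := 1 / 2) (by norm_num)).pow 2
  rw [zero_pow two_ne_zero] at h
  refine h.congr' ?_
  filter_upwards [self_mem_nhdsWithin] with x hx
  rw [mul_pow, ← Real.sqrt_eq_rpow, Real.sq_sqrt (le_of_lt hx), mul_comm]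

lemma isLittleO_one_sub_mul_integral :
    (fun s : ℝ =>
        (1 - s * ∫ u in (0:ℝ)..1, u * arsech u * (1 - s * (1 - π * u / 2))⁻¹)
        - ((2 / π ^ 2) * (1 - s) * (Real.log (1 - s)) ^ 2
            - (4 / π ^ 2) * Real.log π * (1 - s) * Real.log (1 - s)))
      =o[nhdsWithin 1 (Set.Iio 1)] (fun s => (1 - s) * Real.log (1 - s)) := by
  set l := nhdsWithin (1:ℝ) (Set.Iio 1)
  set R : ℝ → ℝ := fun s => (∫ u in (0:ℝ)..1, arsech u / (2 * (1 - s) / (π * s) + u)) -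
    (Real.log (2 * (1 - s) / (π * s)) ^ 2 / 2 - Real.log 2 * Real.log (2 * (1 - s) / (π * s)))
    with hR
  set a : ℝ → ℝ := fun s => Real.log 2 - Real.log π - Real.log s with ha
  have hπ := Real.pi_pos
  have hnear : ∀ᶠ s in l, s ∈ Set.Ioo (1 / 2 : ℝ) 1 := Ioo_mem_nhdsLT (by norm_num)
  have hs : Tendsto (fun s : ℝ => s) l (nhds 1) := tendsto_id.mono_left nhdsWithin_le_nhds
  have hlogs : Tendsto Real.log l (nhds 0) := by
    simpa using hs.log one_ne_zero
  have hinv : Tendsto (fun s => (Real.log (1 - s))⁻¹) l (nhds 0) :=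
    (Real.tendsto_log_nhdsGT_zero.comp tendsto_one_sub_nhdsLT_one).inv_tendsto_atBot
  have hml : Tendsto (fun s => Real.log (1 - s) * (1 - s)) l (nhds 0) := by
    have h := (tendsto_log_mul_rpow_nhdsGT_zero one_pos).comp tendsto_one_sub_nhdsLT_one
    simpa [Function.comp_def] using h
  have h1s : Tendsto (fun s : ℝ => 1 - s) l (nhds 0) :=
    tendsto_one_sub_nhdsLT_one.mono_right nhdsWithin_le_nhds
  have hRl : Tendsto (fun s => R s * (Real.log (1 - s))⁻¹) l (nhds 0) := by
    refine bdd_le_mul_tendsto_zero' (3 + 2 * π) ?_ hinv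
    filter_upwards [hnear] with s hs
    have hps : 0 < π * s := mul_pos hπ (by linarith [hs.1])
    refine abs_integral_arsech_div_sub_le (div_pos (by linarith [hs.2]) hps) ?_
    rw [div_le_one hps]
    nlinarith [hs.1, Real.pi_gt_three]
  have hal : Tendsto (fun s => (a s ^ 2 / 2 - Real.log 2 * a s) * (Real.log (1 - s))⁻¹) l
      (nhds 0) := by
    have h1 : Tendsto a l (nhds (Real.log 2 - Real.log π - 0)) := hlogs.const_sub _
    simpa using (((h1.pow 2).div_const 2).sub (h1.const_mul (Real.log 2))).mul hinv
  refine isLittleO_iff_exists_eq_mul.2 ⟨fun s => 4 / π ^ 2 * s⁻¹ *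
    (Real.log (1 - s) * (1 - s) / 2 - Real.log π * (1 - s) - Real.log s +
      (a s ^ 2 / 2 - Real.log 2 * a s) * (Real.log (1 - s))⁻¹ +
      R s * (Real.log (1 - s))⁻¹), ?_, ?_⟩
  · have h := ((hs.inv₀ one_ne_zero).const_mul (4 / π ^ 2)).mul
      (((((hml.div_const 2).sub (h1s.const_mul (Real.log π))).sub hlogs).add hal).add hRl)
    simpa using h
  · filter_upwards [hnear] with s hs
    have hs0 : 0 < s := by linarith [hs.1]
    have h1s : 0 < 1 - s := by linarith [hs.2]
    have hl : Real.log (1 - s) ≠ 0 := (Real.log_neg h1s (by linarith)).ne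
    have hlε : Real.log (2 * (1 - s) / (π * s)) = Real.log (1 - s) + a s := by
      rw [Real.log_div (by positivity) (by positivity), Real.log_mul two_ne_zero h1s.ne',
        Real.log_mul hπ.ne' hs0.ne', ha]
      ring
    have hJ : ∫ u in (0:ℝ)..1, arsech u / (2 * (1 - s) / (π * s) + u) =
        R s + ((Real.log (1 - s) + a s) ^ 2 / 2 - Real.log 2 * (Real.log (1 - s) + a s)) := by
      rw [hR, ← hlε]
      ring
    have hlogs : Real.log s = Real.log 2 - Real.log π - a s := by rw [ha]; ring
    rw [one_sub_mul_integral_eq hs0 hs.2, hJ, Pi.mul_apply, hlogs]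
    field_simp
    ring

/-- With r(s) := s ∫₀¹ u log((1+√(1−u²))/u) (1 − s(1−πu/2))⁻¹ du, one has
r(s) → 1 as s → 1⁻ and
1 − r(s) = (2/π²)(1−s)log²(1−s) − (4/π²)(log π)(1−s)log(1−s)
            + o((1−s)log(1−s)) as s → 1⁻. -/
theorem stmt_18 :
    Filter.Tendsto
      (fun s : ℝ => s * ∫ u in (0:ℝ)..1,
        u * Real.log ((1 + Real.sqrt (1 - u^2)) / u) * (1 - s * (1 - Real.pi * u / 2))⁻¹)
      (nhdsWithin 1 (Set.Iio 1)) (nhds 1) ∧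
    (fun s : ℝ =>
        (1 - s * ∫ u in (0:ℝ)..1,
          u * Real.log ((1 + Real.sqrt (1 - u^2)) / u) * (1 - s * (1 - Real.pi * u / 2))⁻¹)
        - ((2 / Real.pi^2) * (1 - s) * (Real.log (1 - s))^2
            - (4 / Real.pi^2) * Real.log Real.pi * (1 - s) * Real.log (1 - s)))
      =o[nhdsWithin 1 (Set.Iio 1)] (fun s => (1 - s) * Real.log (1 - s)) := by
  have hO := isLittleO_one_sub_mul_integral
  refine ⟨?_, hO⟩
  have hml : Tendsto (fun s : ℝ => (1 - s) * Real.log (1 - s)) (nhdsWithin 1 (Set.Iio 1))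
      (nhds 0) := by
    have h := (tendsto_log_mul_rpow_nhdsGT_zero one_pos).comp tendsto_one_sub_nhdsLT_one
    simpa [Function.comp_def, mul_comm] using h
  have hml2 : Tendsto (fun s : ℝ => (1 - s) * Real.log (1 - s) ^ 2) (nhdsWithin 1 (Set.Iio 1))
      (nhds 0) := tendsto_mul_log_sq_nhdsGT_zero.comp tendsto_one_sub_nhdsLT_one
  have h := ((hO.trans_tendsto hml).add ((hml2.const_mul (2 / π ^ 2)).sub
    (hml.const_mul (4 / π ^ 2 * Real.log π)))).const_sub 1
  simp only [mul_zero, sub_zero, add_zero] at h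
  refine h.congr fun s => ?_
  simp only [arsech]
  ring
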